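/- Strict inequality characterizes unique optimality: let S and A be nonempty finite types, P : A → Matrix S S ℝ with each P a row-stochastic, R : S → ℝ, and γ ∈ ℝ with 0 < γ < 1. Let π : S → A be a deterministic policy, P^π(s,j) = (P (π s))(s,j), and V^π = (I − γ·P^π)⁻¹ *ᵥ R. Then the following are equivalent: (i) for every state s ∈ S and every action a ∈ A with a ≠ π(s), the s-component of (P^π − P a) *ᵥ V^π is strictly positive; (ii) π is the unique optimal deterministic policy, i.e. π is optimal and every deterministic policy π' ≠ π fails to be optimal. -/

import Mathlib

open Matrix BigOperators

/-- A matrix is row-stochastic if all entries are nonnegative and every row sums to 1. -/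
def RowStochastic {S : Type*} [Fintype S] (P : Matrix S S ℝ) : Prop :=
  (∀ i j, 0 ≤ P i j) ∧ (∀ i, ∑ j, P i j = 1)

/-- The transition matrix `P^π` of a deterministic policy `π`:
`P^π(s, j) = (P (π s))(s, j)`. -/
def polMat {S A : Type*} (P : A → Matrix S S ℝ) (π : S → A) : Matrix S S ℝ :=
  Matrix.of fun s j => P (π s) s j

/-- The value vector `V^π = (I - γ • P^π)⁻¹ *ᵥ R` of a deterministic policy `π`. -/
noncomputable def polVal {S A : Type*} [Fintype S] [DecidableEq S]
    (P : A → Matrix S S ℝ) (γ : ℝ) (R : S → ℝ) (π : S → A) : S → ℝ :=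
  (1 - γ • polMat P π)⁻¹ *ᵥ R

/-!
The value of `π` solves `(1 - γ • P^π) *ᵥ V^π = R`, while for any other policy `π'`
`(1 - γ • P^π') *ᵥ V^π = R + γ • ((P^π - P^π') *ᵥ V^π)`. By the minimum principle `1 - γ • P^π'`
reflects the componentwise order, so the sign of the last summand decides how `V^π` compares with
`V^π'`. Its `s`-component involves `π'` only through the action `π' s`, so strict positivity for all
deviations makes `π` the only optimal policy, while a single deviation without loss yields a
second optimal policy.
-/

section MinimumPrinciple

/-- Entrywise nonnegative square matrices all of whose row sums are smaller than `1`, such as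
`γ • P` for a row-stochastic matrix `P` and `0 ≤ γ < 1`. -/
structure StrictlySubstochastic {n K : Type*} [Fintype n] [Semiring K] [Preorder K]
    (M : Matrix n n K) : Prop where
  nonneg : ∀ i j, 0 ≤ M i j
  row_sum_lt_one : ∀ i, ∑ j, M i j < 1

variable {n K : Type*} [Fintype n]

theorem RowStochastic.strictlySubstochastic_smul {P : Matrix n n ℝ} (hP : RowStochastic P) {γ : ℝ}
    (hγ0 : 0 ≤ γ) (hγ1 : γ < 1) : StrictlySubstochastic (γ • P) where
  nonneg i j := mul_nonneg hγ0 (hP.1 i j)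
  row_sum_lt_one i := by
    simpa only [Matrix.smul_apply, smul_eq_mul, ← Finset.mul_sum, hP.2 i, mul_one] using hγ1

namespace StrictlySubstochastic

theorem nonneg_of_mulVec_le [Ring K] [LinearOrder K] [IsStrictOrderedRing K] {M : Matrix n n K}
    (hM : StrictlySubstochastic M) {d : n → K} (hd : M *ᵥ d ≤ d) : 0 ≤ d := by
  intro i
  have : Nonempty n := ⟨i⟩
  obtain ⟨m, hmin⟩ := Finite.exists_min d
  suffices 0 ≤ d m from this.trans (hmin i)
  by_contra! hneg
  refine lt_irrefl (d m) ?_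
  calc d m < (∑ j, M m j) * d m := lt_mul_of_lt_one_left hneg (hM.row_sum_lt_one m)
    _ = ∑ j, M m j * d m := Finset.sum_mul ..
    _ ≤ ∑ j, M m j * d j :=
      Finset.sum_le_sum fun j _ => mul_le_mul_of_nonneg_left (hmin j) (hM.nonneg m j)
    _ ≤ d m := hd m

theorem le_of_one_sub_mulVec_le [DecidableEq n] [Ring K] [LinearOrder K] [IsStrictOrderedRing K]
    {M : Matrix n n K} (hM : StrictlySubstochastic M) {v w : n → K}
    (h : (1 - M) *ᵥ v ≤ (1 - M) *ᵥ w) : v ≤ w := by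
  refine sub_nonneg.1 (hM.nonneg_of_mulVec_le (sub_nonneg.1 ?_))
  have hsub : w - v - M *ᵥ (w - v) = (1 - M) *ᵥ w - (1 - M) *ᵥ v := by
    rw [← mulVec_sub, sub_mulVec, one_mulVec]
  exact hsub ▸ sub_nonneg.2 h

theorem isUnit_one_sub [DecidableEq n] [Field K] [LinearOrder K] [IsStrictOrderedRing K]
    {M : Matrix n n K} (hM : StrictlySubstochastic M) : IsUnit (1 - M) :=
  mulVec_injective_iff_isUnit.1 fun _ _ h =>
    le_antisymm (hM.le_of_one_sub_mulVec_le h.le) (hM.le_of_one_sub_mulVec_le h.ge)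

end StrictlySubstochastic

end MinimumPrinciple

section Policies

variable {S A : Type*} [Fintype S] {P : A → Matrix S S ℝ} {γ : ℝ} {R : S → ℝ} {π π' : S → A}

theorem strictlySubstochastic_smul_polMat (hP : ∀ a, StrictlySubstochastic (γ • P a))
    (π : S → A) : StrictlySubstochastic (γ • polMat P π) where
  nonneg s := (hP (π s)).nonneg s
  row_sum_lt_one s := (hP (π s)).row_sum_lt_one s

variable [DecidableEq S]

/-- The loss in expected next-state value, measured by `V^π`, when the action `a` replaces `π s` at
the state `s`. Up to the factor `-γ` this is the advantage of `a` at `s` over `π`. -/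
noncomputable def deviationLoss (P : A → Matrix S S ℝ) (γ : ℝ) (R : S → ℝ) (π : S → A) (s : S)
    (a : A) : ℝ :=
  ((polMat P π - P a) *ᵥ polVal P γ R π) s

/-- Optimality of `π` among the deterministic policies. -/
def IsOptimalPolicy (P : A → Matrix S S ℝ) (γ : ℝ) (R : S → ℝ) (π : S → A) : Prop :=
  ∀ π' : S → A, polVal P γ R π' ≤ polVal P γ R π

theorem deviationLoss_self (s : S) : deviationLoss P γ R π s (π s) = 0 := by
  rw [deviationLoss, sub_mulVec, Pi.sub_apply]
  exact sub_self _

theorem one_sub_smul_polMat_mulVec_polVal (hP : ∀ a, StrictlySubstochastic (γ • P a))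
    (R : S → ℝ) (π : S → A) : (1 - γ • polMat P π) *ᵥ polVal P γ R π = R := by
  have hdet := (isUnit_iff_isUnit_det _).1 (strictlySubstochastic_smul_polMat hP π).isUnit_one_sub
  rw [polVal, mulVec_mulVec, mul_nonsing_inv _ hdet, one_mulVec]

theorem one_sub_smul_polMat_mulVec_polVal_apply (hP : ∀ a, StrictlySubstochastic (γ • P a))
    (R : S → ℝ) (π π' : S → A) (s : S) :
    ((1 - γ • polMat P π') *ᵥ polVal P γ R π) s = R s + γ * deviationLoss P γ R π s (π' s) := by
  have hsplit : 1 - γ • polMat P π' = (1 - γ • polMat P π) + γ • (polMat P π - polMat P π') := by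
    rw [smul_sub, sub_add_sub_cancel]
  rw [hsplit, add_mulVec, one_sub_smul_polMat_mulVec_polVal hP, smul_mulVec]
  -- Row `s` of `polMat P π'` is by definition row `s` of `P (π' s)`.
  rfl

theorem polVal_le_of_deviationLoss_nonneg (hP : ∀ a, StrictlySubstochastic (γ • P a))
    (hγ : 0 ≤ γ) (hloss : ∀ s, 0 ≤ deviationLoss P γ R π s (π' s)) :
    polVal P γ R π' ≤ polVal P γ R π := by
  refine (strictlySubstochastic_smul_polMat hP π').le_of_one_sub_mulVec_le fun s => ?_
  rw [one_sub_smul_polMat_mulVec_polVal hP, one_sub_smul_polMat_mulVec_polVal_apply hP]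
  exact le_add_of_nonneg_right (mul_nonneg hγ (hloss s))

theorem le_polVal_of_deviationLoss_nonpos (hP : ∀ a, StrictlySubstochastic (γ • P a))
    (hγ : 0 ≤ γ) (hloss : ∀ s, deviationLoss P γ R π s (π' s) ≤ 0) :
    polVal P γ R π ≤ polVal P γ R π' := by
  refine (strictlySubstochastic_smul_polMat hP π').le_of_one_sub_mulVec_le fun s => ?_
  rw [one_sub_smul_polMat_mulVec_polVal hP, one_sub_smul_polMat_mulVec_polVal_apply hP]
  exact add_le_of_nonpos_right (mul_nonpos_of_nonneg_of_nonpos hγ (hloss s))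

theorem deviationLoss_eq_zero_of_polVal_eq (hP : ∀ a, StrictlySubstochastic (γ • P a))
    (hγ : γ ≠ 0) (hval : polVal P γ R π = polVal P γ R π') (s : S) :
    deviationLoss P γ R π s (π' s) = 0 := by
  have hBellman := one_sub_smul_polMat_mulVec_polVal_apply hP R π π' s
  rw [hval, one_sub_smul_polMat_mulVec_polVal hP, left_eq_add] at hBellman
  exact (mul_eq_zero.1 hBellman).resolve_left hγ

theorem strict_advantage_iff_unique_optimal_general
    (hP : ∀ a, StrictlySubstochastic (γ • P a)) (hγ : 0 < γ) :
    (∀ (s : S) (a : A), a ≠ π s → 0 < deviationLoss P γ R π s a) ↔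
      IsOptimalPolicy P γ R π ∧ ∀ π' : S → A, π' ≠ π → ¬ IsOptimalPolicy P γ R π' := by
  constructor
  · intro hpos
    have hnonneg (s : S) (a : A) : 0 ≤ deviationLoss P γ R π s a := by
      rcases eq_or_ne a (π s) with rfl | ha
      exacts [(deviationLoss_self s).ge, (hpos s a ha).le]
    have hopt : IsOptimalPolicy P γ R π := fun π' =>
      polVal_le_of_deviationLoss_nonneg hP hγ.le fun s => hnonneg s (π' s)
    refine ⟨hopt, fun π' hne hopt' => ?_⟩
    obtain ⟨s, hs⟩ := Function.ne_iff.1 hne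
    have hval : polVal P γ R π = polVal P γ R π' := le_antisymm (hopt' π) (hopt π')
    exact (hpos s (π' s) hs).ne' (deviationLoss_eq_zero_of_polVal_eq hP hγ.ne' hval s)
  · rintro ⟨hopt, huniq⟩ s a ha
    by_contra! hle
    have hloss : ∀ t, deviationLoss P γ R π t (Function.update π s a t) ≤ 0 :=
      (Function.forall_update_iff π fun t b => deviationLoss P γ R π t b ≤ 0).2
        ⟨hle, fun t _ => (deviationLoss_self t).le⟩
    exact huniq (Function.update π s a) (Function.update_ne_self_iff.2 ha) fun π' =>
      (hopt π').trans (le_polVal_of_deviationLoss_nonpos hP hγ.le hloss)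

end Policies

/-- Strict inequality in the optimality condition characterizes unique optimality. -/
theorem strict_advantage_iff_unique_optimal {S A : Type*} [Fintype S] [DecidableEq S]
    [Nonempty S] [Fintype A] [Nonempty A] (P : A → Matrix S S ℝ)
    (hP : ∀ a, RowStochastic (P a)) (R : S → ℝ) (γ : ℝ) (hγ0 : 0 < γ) (hγ1 : γ < 1)
    (π : S → A) :
    (∀ s : S, ∀ a : A, a ≠ π s →
        0 < ((polMat P π - P a) *ᵥ ((1 - γ • polMat P π)⁻¹ *ᵥ R)) s) ↔
    ((∀ π' : S → A, ∀ s : S, polVal P γ R π' s ≤ polVal P γ R π s) ∧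
      ∀ π' : S → A, π' ≠ π →
        ¬ (∀ π'' : S → A, ∀ s : S, polVal P γ R π'' s ≤ polVal P γ R π' s)) :=
  strict_advantage_iff_unique_optimal_general
    (fun a => (hP a).strictlySubstochastic_smul hγ0.le hγ1) hγ0
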